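/- Let L, and for each layer ℓ ∈ {1,…,L}, dimensions d_out(ℓ), d_in(ℓ), r(ℓ) be positive integers, and let A_ℓ ∈ ℝ^{d_in(ℓ)×r(ℓ)} have orthonormal columns (A_ℓᵀA_ℓ = I). Let f be a differentiable function on the product parameter space with Lip-Lipschitz gradient, let μ > 0, and let W be a point of the parameter space. Then for every layer ℓ, ∇_{W_ℓ} f_{μ,A}(W) · A_ℓA_ℓᵀ = E_R[ ((f(W + μΔ(R)) − f(W))/μ) · R_ℓA_ℓᵀ ]; that is, the expected AGZO two-point finite-difference estimator equals the gradient of the subspace-smoothed objective projected onto span(A_ℓ). -/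

import Mathlib

open MeasureTheory ProbabilityTheory Matrix

attribute [local instance] Matrix.frobeniusNormedAddCommGroup Matrix.frobeniusNormedSpace
attribute [-instance] instTopologicalSpaceMatrix Matrix.instUniformSpace

noncomputable section

/-- Entrywise expectation of a matrix-valued function. -/
def matExp {Ω : Type*} [MeasurableSpace Ω] (P : Measure Ω)
    {ι κ : Type*} (F : Ω → Matrix ι κ ℝ) : Matrix ι κ ℝ :=
  Matrix.of fun i j => ∫ ω, F ω i j ∂P

variable {L : ℕ} {dout din r : Fin L → ℕ}

/-- The block of the (Frobenius) gradient of `f` corresponding to layer `ℓ`: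
its `(i,j)` entry is the partial derivative of `f` in the direction of the
standard basis matrix `E_{ij}` of layer `ℓ`. -/
def gradBlock (f : ((ℓ : Fin L) → Matrix (Fin (dout ℓ)) (Fin (din ℓ)) ℝ) → ℝ)
    (W : (ℓ : Fin L) → Matrix (Fin (dout ℓ)) (Fin (din ℓ)) ℝ) (ℓ : Fin L) :
    Matrix (Fin (dout ℓ)) (Fin (din ℓ)) ℝ :=
  Matrix.of fun i j => fderiv ℝ f W (Pi.single ℓ (Matrix.single i j 1))

/-- The product of standard Gaussian measures over all entries of all blocks
`R_ℓ ∈ ℝ^{dout(ℓ) × r(ℓ)}` (i.i.d. standard Gaussian entries). -/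
def gaussBlocks (dout r : Fin L → ℕ) :
    Measure ((ℓ : Fin L) → Fin (dout ℓ) → Fin (r ℓ) → ℝ) :=
  Measure.pi fun _ => Measure.pi fun _ => Measure.pi fun _ => gaussianReal 0 1

/-- The AGZO perturbation `Δ(R) = (R₁A₁ᵀ, …, R_L A_Lᵀ)`. -/
def perturbA (A : (ℓ : Fin L) → Matrix (Fin (din ℓ)) (Fin (r ℓ)) ℝ)
    (R : (ℓ : Fin L) → Fin (dout ℓ) → Fin (r ℓ) → ℝ) :
    (ℓ : Fin L) → Matrix (Fin (dout ℓ)) (Fin (din ℓ)) ℝ :=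
  fun ℓ => Matrix.of (R ℓ) * (A ℓ)ᵀ

/-- The subspace-smoothed objective `f_{μ,A}(W) = E_R[f(W + μΔ(R))]`. -/
def smoothedA (f : ((ℓ : Fin L) → Matrix (Fin (dout ℓ)) (Fin (din ℓ)) ℝ) → ℝ)
    (μ : ℝ) (A : (ℓ : Fin L) → Matrix (Fin (din ℓ)) (Fin (r ℓ)) ℝ)
    (W : (ℓ : Fin L) → Matrix (Fin (dout ℓ)) (Fin (din ℓ)) ℝ) : ℝ :=
  ∫ R, f (W + μ • perturbA A R) ∂(gaussBlocks dout r)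

section SteinAux

/-- Differentiable with Lipschitz derivative. -/
def NiceFn {E : Type*} [NormedAddCommGroup E] [NormedSpace ℝ E] (g : E → ℝ) : Prop :=
  Differentiable ℝ g ∧ ∃ C : ℝ, 0 ≤ C ∧ ∀ x y, ‖fderiv ℝ g x - fderiv ℝ g y‖ ≤ C * ‖x - y‖

/-- Gaussian integration by parts. -/
def SteinP {E : Type*} [NormedAddCommGroup E] [NormedSpace ℝ E] [MeasurableSpace E]
    (P : Measure E) (X : E → ℝ) (v : E) : Prop :=
  ∀ g : E → ℝ, NiceFn g → ∫ x, g x * X x ∂P = ∫ x, fderiv ℝ g x v ∂P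

theorem NiceFn.cont_fderiv {E : Type*} [NormedAddCommGroup E] [NormedSpace ℝ E] {g : E → ℝ}
    (hg : NiceFn g) : Continuous (fderiv ℝ g) := by
  obtain ⟨_, C, hC, h⟩ := hg
  refine (LipschitzWith.of_dist_le_mul (K := ⟨C, hC⟩) fun x y => ?_).continuous
  rw [dist_eq_norm, dist_eq_norm]
  exact h x y

theorem NiceFn.fderiv_bound {E : Type*} [NormedAddCommGroup E] [NormedSpace ℝ E] {g : E → ℝ}
    (hg : NiceFn g) : ∃ K : ℝ, 0 ≤ K ∧ ∀ x, ‖fderiv ℝ g x‖ ≤ K * (1 + ‖x‖) := by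
  obtain ⟨_, C, hC, h⟩ := hg
  refine ⟨‖fderiv ℝ g 0‖ + C, by positivity, fun x => ?_⟩
  have h1 := h x 0
  have h2 : ‖fderiv ℝ g x‖ ≤ ‖fderiv ℝ g 0‖ + ‖fderiv ℝ g x - fderiv ℝ g 0‖ := by
    simpa using norm_add_le (fderiv ℝ g 0) (fderiv ℝ g x - fderiv ℝ g 0)
  rw [sub_zero] at h1
  nlinarith [norm_nonneg x, norm_nonneg (fderiv ℝ g 0),
    mul_nonneg (norm_nonneg (fderiv ℝ g 0)) (norm_nonneg x)]

theorem NiceFn.growth {E : Type*} [NormedAddCommGroup E] [NormedSpace ℝ E] {g : E → ℝ}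
    (hg : NiceFn g) : ∃ K : ℝ, 0 ≤ K ∧ ∀ x, ‖g x‖ ≤ K * (1 + ‖x‖) ^ 2 := by
  obtain ⟨K, hK, hb⟩ := hg.fderiv_bound
  refine ⟨‖g 0‖ + K, by positivity, fun x => ?_⟩
  have h1 : ‖g x - g 0‖ ≤ K * (1 + ‖x‖) * ‖x - 0‖ := by
    refine (convex_closedBall (0 : E) ‖x‖).norm_image_sub_le_of_norm_fderiv_le (𝕜 := ℝ)
      (fun y _ => hg.1 y) (fun y hy => (hb y).trans ?_) (by simp) (by simp)
    have : ‖y‖ ≤ ‖x‖ := by simpa using hy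
    gcongr
  have h2 : ‖g x‖ ≤ ‖g 0‖ + ‖g x - g 0‖ := by
    simpa using norm_add_le (g 0) (g x - g 0)
  rw [sub_zero] at h1
  have := norm_nonneg x
  have := norm_nonneg (g 0)
  have e : 0 ≤ ‖g 0‖ * (2 * ‖x‖ + ‖x‖ ^ 2) := by positivity
  have e2 : 0 ≤ K * ‖x‖ := by positivity
  nlinarith

theorem int_cube {E : Type*} [NormedAddCommGroup E] [MeasurableSpace E]
    {P : Measure E} [IsFiniteMeasure P] (hP : MemLp id 3 P) :
    Integrable (fun x : E => (1 + ‖x‖) ^ 3) P := by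
  have h : MemLp (fun x : E => 1 + ‖x‖) 3 P := (memLp_const (1 : ℝ)).add hP.norm
  have := h.integrable_norm_pow (p := 3) (by norm_num)
  refine this.congr (Filter.Eventually.of_forall fun x => ?_)
  simp only [Real.norm_eq_abs]
  rw [abs_of_nonneg (by positivity)]

theorem int_of_bound {E F : Type*} [NormedAddCommGroup E] [MeasurableSpace E] [BorelSpace E]
    [SecondCountableTopology E] [NormedAddCommGroup F]
    {P : Measure E} [IsFiniteMeasure P] (hP : MemLp id 3 P) {h : E → F} (hc : Continuous h)
    {K : ℝ} (hb : ∀ x, ‖h x‖ ≤ K * (1 + ‖x‖) ^ 3) : Integrable h P :=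
  ((int_cube hP).const_mul K).mono' hc.aestronglyMeasurable (Filter.Eventually.of_forall hb)

theorem NiceFn.int_fderiv {E : Type*} [NormedAddCommGroup E] [NormedSpace ℝ E]
    [MeasurableSpace E] [BorelSpace E] [SecondCountableTopology E] {g : E → ℝ}
    (hg : NiceFn g) {P : Measure E} [IsFiniteMeasure P] (hP : MemLp id 3 P) :
    Integrable (fderiv ℝ g) P := by
  obtain ⟨K, hK, hb⟩ := hg.fderiv_bound
  refine int_of_bound hP hg.cont_fderiv (K := K) fun x => (hb x).trans ?_
  gcongr
  exact le_self_pow₀ (by linarith [norm_nonneg x]) (by norm_num)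

theorem NiceFn.int {E : Type*} [NormedAddCommGroup E] [NormedSpace ℝ E]
    [MeasurableSpace E] [BorelSpace E] [SecondCountableTopology E] {g : E → ℝ}
    (hg : NiceFn g) {P : Measure E} [IsFiniteMeasure P] (hP : MemLp id 3 P) :
    Integrable g P := by
  obtain ⟨K, hK, hb⟩ := hg.growth
  refine int_of_bound hP hg.1.continuous (K := K) fun x => (hb x).trans ?_
  gcongr
  · linarith [norm_nonneg x]
  · norm_num

theorem NiceFn.int_mul {E : Type*} [NormedAddCommGroup E] [NormedSpace ℝ E]
    [MeasurableSpace E] [BorelSpace E] [SecondCountableTopology E] {g : E → ℝ}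
    (hg : NiceFn g) {P : Measure E} [IsFiniteMeasure P] (hP : MemLp id 3 P)
    {X : E → ℝ} (hX : Continuous X) (hXb : ∀ x, ‖X x‖ ≤ ‖x‖) :
    Integrable (fun x => g x * X x) P := by
  obtain ⟨K, hK, hb⟩ := hg.growth
  refine int_of_bound hP (hg.1.continuous.mul hX) (K := K) fun x => ?_
  rw [norm_mul]
  have h1 : ‖X x‖ ≤ 1 + ‖x‖ := by linarith [hXb x]
  calc ‖g x‖ * ‖X x‖ ≤ (K * (1 + ‖x‖) ^ 2) * (1 + ‖x‖) := by
        gcongr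
        exact hb x
    _ = K * (1 + ‖x‖) ^ 3 := by ring

theorem memLp_real : MemLp id 3 (gaussianReal 0 1) :=
  memLp_id_gaussianReal' 3 (by norm_num)

theorem stein_real : SteinP (gaussianReal 0 1) (fun x => x) (1 : ℝ) := by
  intro g hg
  have hd : ∀ x : ℝ, HasDerivAt (gaussianPDFReal 0 1) (-x * gaussianPDFReal 0 1 x) x := by
    intro x
    rw [gaussianPDFReal_def]
    have h1 : HasDerivAt (fun x : ℝ => -(x - 0) ^ 2 / (2 * ((1 : NNReal) : ℝ))) (-x) x := by
      have := ((((hasDerivAt_id x).sub_const 0).pow 2).neg).div_const (2 * ((1 : NNReal) : ℝ))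
      refine this.congr_deriv ?_
      simp only [id, NNReal.coe_one]
      norm_num
      ring
    refine (h1.exp.const_mul _).congr_deriv ?_
    ring
  have hi : ∀ h : ℝ → ℝ, Integrable h (gaussianReal 0 1) →
      Integrable (fun x => h x * gaussianPDFReal 0 1 x) := by
    intro h hh
    rw [gaussianReal_of_var_ne_zero 0 one_ne_zero, integrable_withDensity_iff
      (measurable_gaussianPDF 0 1) (Filter.Eventually.of_forall fun x => by simp [gaussianPDF])] at hh
    simpa using hh
  have i1 := hi _ (hg.int_mul memLp_real continuous_id (fun x => le_rfl))
  have i2 := hi _ ((hg.int_fderiv memLp_real).apply_continuousLinearMap (1 : ℝ))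
  have i3 := hi _ (hg.int memLp_real)
  have key := integral_mul_deriv_eq_deriv_mul_of_integrable (u := g) (v := gaussianPDFReal 0 1)
    (u' := fun x => fderiv ℝ g x 1) (v' := fun x => -x * gaussianPDFReal 0 1 x)
    (fun x _ => (hg.1 x).hasFDerivAt.hasDerivAt) (fun x _ => hd x)
    (by refine i1.neg.congr (Filter.Eventually.of_forall fun x => ?_)
        simp only [Pi.neg_apply, Pi.mul_apply, id]
        ring) i2 i3
  rw [integral_gaussianReal_eq_integral_smul one_ne_zero,
    integral_gaussianReal_eq_integral_smul one_ne_zero]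
  simp only [smul_eq_mul]
  have e1 : ∀ x, gaussianPDFReal 0 1 x * (g x * x) = -(g x * (-x * gaussianPDFReal 0 1 x)) := by
    intro x; ring
  simp_rw [e1, integral_neg, key, neg_neg]
  exact integral_congr_ae (Filter.Eventually.of_forall fun x => mul_comm _ _)

theorem memLp_piE {ι : Type*} [Fintype ι] {E : ι → Type*} [∀ i, NormedAddCommGroup (E i)]
    [∀ i, MeasurableSpace (E i)] [∀ i, BorelSpace (E i)] [∀ i, SecondCountableTopology (E i)]
    (P : ∀ i, Measure (E i)) [∀ i, IsProbabilityMeasure (P i)]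
    (hP : ∀ i, MemLp id 3 (P i)) : MemLp id 3 (Measure.pi P) := by
  refine memLp_pi_iff.2 fun i => ?_
  exact (hP i).comp_measurePreserving (measurePreserving_eval P i)

theorem mp_update {ι : Type*} [Fintype ι] [DecidableEq ι] {E : ι → Type*}
    [∀ i, MeasurableSpace (E i)]
    (P : ∀ i, Measure (E i)) [∀ i, IsProbabilityMeasure (P i)] (i : ι) :
    MeasurePreserving (fun p : (∀ j, E j) × E i => Function.update p.1 i p.2)
      ((Measure.pi P).prod (P i)) (Measure.pi P) := by
  have hm : Measurable (fun p : (∀ j, E j) × E i => Function.update p.1 i p.2) := by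
    refine measurable_pi_lambda _ fun j => ?_
    by_cases h : j = i
    · subst h; simpa using measurable_snd
    · simp only [Function.update_of_ne h]; fun_prop
  refine ⟨hm, ?_⟩
  refine (Measure.pi_eq fun s hs => ?_).symm
  rw [Measure.map_apply hm (MeasurableSet.univ_pi hs)]
  have : (fun p : (∀ j, E j) × E i => Function.update p.1 i p.2) ⁻¹' (Set.univ.pi s)
      = (Set.univ.pi (Function.update s i Set.univ)) ×ˢ (s i) := by
    ext p
    simp only [Set.mem_preimage, Set.mem_univ_pi, Set.mem_prod]
    constructor
    · intro h
      refine ⟨fun j => ?_, by simpa using h i⟩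
      by_cases hj : j = i
      · subst hj; simp
      · simpa [hj] using h j
    · rintro ⟨h1, h2⟩ j
      by_cases hj : j = i
      · subst hj; simpa using h2
      · simpa [hj] using h1 j
  rw [this, Measure.prod_prod, Measure.pi_pi, ← Finset.mul_prod_erase _ _ (Finset.mem_univ i),
    ← Finset.mul_prod_erase Finset.univ (fun j => P j (s j)) (Finset.mem_univ i)]
  simp only [Function.update_self, measure_univ, one_mul]
  rw [mul_comm]
  congr 1
  refine Finset.prod_congr rfl fun j hj => ?_
  rw [Function.update_of_ne (Finset.ne_of_mem_erase hj)]

theorem stein_pi {ι : Type*} [Fintype ι] [DecidableEq ι] {E : ι → Type*}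
    [∀ i, NormedAddCommGroup (E i)] [∀ i, NormedSpace ℝ (E i)]
    [∀ i, MeasurableSpace (E i)] [∀ i, BorelSpace (E i)] [∀ i, SecondCountableTopology (E i)]
    (P : ∀ i, Measure (E i)) [∀ i, IsProbabilityMeasure (P i)]
    (hP : ∀ i, MemLp id 3 (P i)) (i : ι) (X : E i → ℝ) (v : E i) (hX : Continuous X)
    (hXb : ∀ x, ‖X x‖ ≤ ‖x‖) (hS : SteinP (P i) X v) :
    SteinP (Measure.pi P) (fun x => X (x i)) (Pi.single i v) := by
  intro g hg
  have hM := memLp_piE P hP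
  have i1 := hg.int_mul hM (X := fun x => X (x i)) (by fun_prop)
    (fun x => (hXb _).trans (norm_le_pi_norm x i))
  have i2 := (hg.int_fderiv hM).apply_continuousLinearMap (Pi.single i v)
  have mp := mp_update P i
  have tr : ∀ h : (∀ j, E j) → ℝ, Integrable h (Measure.pi P) →
      ∫ x, h x ∂(Measure.pi P) =
        ∫ x, ∫ t, h (Function.update x i t) ∂(P i) ∂(Measure.pi P) := by
    intro h hh
    have hh' := hh
    rw [← mp.map_eq] at hh'
    have e := integral_map mp.measurable.aemeasurable hh'.aestronglyMeasurable
    rw [mp.map_eq] at e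
    rw [e, integral_prod]
    exact mp.integrable_comp_of_integrable hh
  rw [tr _ i1, tr _ i2]
  refine integral_congr_ae (Filter.Eventually.of_forall fun x => ?_)
  have hfd : ∀ t, HasFDerivAt (fun t => g (Function.update x i t))
      ((fderiv ℝ g (Function.update x i t)).comp
        (ContinuousLinearMap.single ℝ E i)) t := by
    intro t
    have hu : HasFDerivAt (𝕜 := ℝ) (Function.update x i) (ContinuousLinearMap.single ℝ E i) t := by
      refine (hasFDerivAt_update (𝕜 := ℝ) x t).congr_fderiv ?_
      ext w j
      by_cases hj : j = i
      · subst hj; simp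
      · simp [hj]
    exact (hg.1 _).hasFDerivAt.comp t hu
  have hn : NiceFn (fun t => g (Function.update x i t)) := by
    obtain ⟨hd, C, hC, h⟩ := hg
    refine ⟨fun t => (hfd t).differentiableAt, C, hC, fun s t => ?_⟩
    rw [(hfd s).fderiv, (hfd t).fderiv, ← ContinuousLinearMap.sub_comp]
    have e : Function.update x i s - Function.update x i t = Pi.single i (s - t) := by
      rw [← Function.update_sub, sub_self]; rfl
    refine ContinuousLinearMap.opNorm_le_bound _ (by positivity) fun w => ?_
    rw [ContinuousLinearMap.comp_apply]
    refine (ContinuousLinearMap.le_opNorm _ _).trans ?_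
    have h1 := h (Function.update x i s) (Function.update x i t)
    rw [e, Pi.norm_single] at h1
    have h2 : ‖ContinuousLinearMap.single ℝ E i w‖ = ‖w‖ := Pi.norm_single w
    rw [h2]
    gcongr
  have := hS _ hn
  simp only [Function.update_self]
  rw [this]
  refine integral_congr_ae (Filter.Eventually.of_forall fun t => ?_)
  simp only
  rw [(hfd t).fderiv]
  rfl

theorem NiceFn.comp_affine {E H : Type*} [NormedAddCommGroup E] [NormedSpace ℝ E]
    [NormedAddCommGroup H] [NormedSpace ℝ H] {f : H → ℝ} (hf : NiceFn f) (D : E →L[ℝ] H) (W : H) :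
    (∀ R, HasFDerivAt (fun R => f (W + D R)) ((fderiv ℝ f (W + D R)).comp D) R) ∧
      NiceFn (fun R => f (W + D R)) := by
  have hfd : ∀ R, HasFDerivAt (fun R => f (W + D R)) ((fderiv ℝ f (W + D R)).comp D) R :=
    fun R => (hf.1 _).hasFDerivAt.comp R (D.hasFDerivAt.const_add W)
  refine ⟨hfd, ?_⟩
  obtain ⟨hd, C, hC, h⟩ := hf
  refine ⟨fun R => (hfd R).differentiableAt, C * ‖D‖ * ‖D‖, by positivity, fun x y => ?_⟩
  rw [(hfd x).fderiv, (hfd y).fderiv, ← ContinuousLinearMap.sub_comp]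
  refine (ContinuousLinearMap.opNorm_comp_le _ _).trans ?_
  have h1 := h (W + D x) (W + D y)
  rw [add_sub_add_left_eq_sub, ← map_sub] at h1
  calc _ ≤ (C * (‖D‖ * ‖x - y‖)) * ‖D‖ := by
        gcongr
        refine h1.trans ?_
        gcongr
        exact D.le_opNorm _
    _ = _ := by ring

theorem abstract_two_point {E H : Type*} [NormedAddCommGroup E] [NormedSpace ℝ E]
    [MeasurableSpace E] [BorelSpace E] [SecondCountableTopology E]
    [NormedAddCommGroup H] [NormedSpace ℝ H] {f : H → ℝ} (hf : NiceFn f) (D : E →L[ℝ] H) (W : H)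
    {P : Measure E} [IsProbabilityMeasure P] (hP : MemLp id 3 P) {X : E → ℝ} (hX : Continuous X)
    (hXb : ∀ x, ‖X x‖ ≤ ‖x‖) {v : E} (hS : SteinP P X v) :
    Integrable (fun R => (f (W + D R) - f W) * X R) P ∧
    ∫ R, (f (W + D R) - f W) * X R ∂P = fderiv ℝ (fun W => ∫ R, f (W + D R) ∂P) W (D v) := by
  obtain ⟨hfd, hn⟩ := hf.comp_affine D W
  have c1 : NiceFn (fun _ : E => f W) :=
    ⟨differentiable_const _, 0, le_rfl, fun x y => by simp⟩
  have j1 := hn.int_mul hP hX hXb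
  have j2 := c1.int_mul hP hX hXb
  have j := j1.sub j2
  have e : ∀ R, (f (W + D R) - f W) * X R = f (W + D R) * X R - f W * X R := fun R => by ring
  simp_rw [e]
  refine ⟨j, ?_⟩
  rw [integral_sub j1 j2, hS _ hn, hS _ c1]
  have z : ∫ x, fderiv ℝ (fun _ : E => f W) x v ∂P = 0 := by simp
  rw [z, sub_zero]
  obtain ⟨K, hK, hb⟩ := hf.fderiv_bound
  have hcf : Continuous (fun R => fderiv ℝ f (W + D R)) :=
    hf.cont_fderiv.comp (by fun_prop)
  have hbd : ∀ R : E, ∀ x ∈ Metric.ball W 1,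
      ‖fderiv ℝ f (x + D R)‖ ≤ (K * (2 + ‖W‖ + ‖D‖)) * (1 + ‖R‖) ^ 3 := by
    intro R x hx
    refine (hb _).trans ?_
    have h1 : ‖x‖ ≤ ‖W‖ + 1 := by
      have : ‖x - W‖ < 1 := by simpa [dist_eq_norm] using hx
      have := norm_add_le W (x - W)
      rw [add_sub_cancel] at this
      linarith
    have h2 : ‖x + D R‖ ≤ ‖W‖ + 1 + ‖D‖ * ‖R‖ :=
      (norm_add_le _ _).trans (add_le_add h1 (D.le_opNorm R))
    have h3 : 1 + ‖R‖ ≤ (1 + ‖R‖) ^ 3 :=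
      le_self_pow₀ (by linarith [norm_nonneg R]) (by norm_num)
    have h4 : 1 + ‖x + D R‖ ≤ (2 + ‖W‖ + ‖D‖) * (1 + ‖R‖) := by
      nlinarith [norm_nonneg R, norm_nonneg W, norm_nonneg D,
        mul_nonneg (norm_nonneg W) (norm_nonneg R)]
    calc K * (1 + ‖x + D R‖) ≤ K * ((2 + ‖W‖ + ‖D‖) * (1 + ‖R‖) ^ 3) := by
          gcongr
          exact h4.trans (by gcongr)
      _ = _ := by ring
  have hder : HasFDerivAt (fun W => ∫ R, f (W + D R) ∂P) (∫ R, fderiv ℝ f (W + D R) ∂P) W := by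
    refine hasFDerivAt_integral_of_dominated_of_fderiv_le (𝕜 := ℝ)
      (F := fun W R => f (W + D R)) (F' := fun W R => fderiv ℝ f (W + D R))
      (bound := fun R => (K * (2 + ‖W‖ + ‖D‖)) * (1 + ‖R‖) ^ 3)
      (Metric.ball_mem_nhds W one_pos) ?_ (hn.int hP) hcf.aestronglyMeasurable
      (Filter.Eventually.of_forall hbd) ((int_cube hP).const_mul _) ?_
    · refine Filter.Eventually.of_forall fun x => ?_
      exact (hf.1.continuous.comp (by fun_prop : Continuous fun R => x + D R)).aestronglyMeasurable
    · refine Filter.Eventually.of_forall fun R x _ => ?_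
      have h0 := (hf.1 (x + D R)).hasFDerivAt.comp x ((hasFDerivAt_id (𝕜 := ℝ) x).add_const (D R))
      simpa [Function.comp_def] using h0
  have hint : Integrable (fun R => fderiv ℝ f (W + D R)) P :=
    int_of_bound hP hcf fun R => hbd R W (Metric.mem_ball_self one_pos)
  rw [hder.fderiv, ContinuousLinearMap.integral_apply hint]
  refine integral_congr_ae (Filter.Eventually.of_forall fun R => ?_)
  simp only
  rw [(hfd R).fderiv]
  rfl

theorem gauss_blocks_facts {L : ℕ} (dout r : Fin L → ℕ) :
    IsProbabilityMeasure (gaussBlocks dout r) ∧ MemLp id 3 (gaussBlocks dout r) ∧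
    ∀ (ℓ : Fin L) (i : Fin (dout ℓ)) (k : Fin (r ℓ)),
      SteinP (gaussBlocks dout r) (fun R => R ℓ i k)
        (Pi.single ℓ (Pi.single i (Pi.single k 1))) := by
  have m1 : ∀ ℓ : Fin L, MemLp id 3 (Measure.pi fun _ : Fin (r ℓ) => gaussianReal 0 1) :=
    fun ℓ => memLp_piE _ fun _ => memLp_real
  have m2 : ∀ ℓ : Fin L, MemLp id 3
      (Measure.pi fun _ : Fin (dout ℓ) => Measure.pi fun _ : Fin (r ℓ) => gaussianReal 0 1) :=
    fun ℓ => memLp_piE _ fun _ => m1 ℓ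
  refine ⟨by unfold gaussBlocks; infer_instance, memLp_piE _ m2, fun ℓ i k => ?_⟩
  have s1 := stein_pi (fun _ : Fin (r ℓ) => gaussianReal 0 1) (fun _ => memLp_real) k
    (fun x => x) 1 continuous_id (fun x => le_rfl) stein_real
  have s2 := stein_pi (fun _ : Fin (dout ℓ) => Measure.pi fun _ : Fin (r ℓ) => gaussianReal 0 1)
    (fun _ => m1 ℓ) i (fun x => x k) _ (by fun_prop) (fun x => norm_le_pi_norm x k) s1
  exact stein_pi (fun ℓ : Fin L => Measure.pi fun _ : Fin (dout ℓ) =>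
    Measure.pi fun _ : Fin (r ℓ) => gaussianReal 0 1)
    m2 ℓ (fun x => x i k) _ (by fun_prop)
    (fun x => (norm_le_pi_norm (x i) k).trans (norm_le_pi_norm x i)) s2

end SteinAux

/-- The perturbation as a linear map. -/
def perturbLin {L : ℕ} {dout din r : Fin L → ℕ}
    (A : (ℓ : Fin L) → Matrix (Fin (din ℓ)) (Fin (r ℓ)) ℝ) :
    ((ℓ : Fin L) → Fin (dout ℓ) → Fin (r ℓ) → ℝ) →ₗ[ℝ]
      ((ℓ : Fin L) → Matrix (Fin (dout ℓ)) (Fin (din ℓ)) ℝ) where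
  toFun := perturbA A
  map_add' x y := by
    funext ℓ
    ext i j
    simp [perturbA, Matrix.mul_apply, add_mul, Finset.sum_add_distrib]
  map_smul' c x := by
    funext ℓ
    ext i j
    simp [perturbA, Matrix.mul_apply, mul_assoc, Finset.mul_sum]

/-- the expected AGZO two-point finite-difference estimator equals the
gradient of the subspace-smoothed objective projected onto `span(A_ℓ)`:
`∇_{W_ℓ} f_{μ,A}(W) · A_ℓA_ℓᵀ = E_R[((f(W + μΔ(R)) − f(W))/μ) · R_ℓA_ℓᵀ]`. -/
theorem agzo_subspace_smoothing_two_point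
    (L : ℕ) (hL : 0 < L) (dout din r : Fin L → ℕ)
    (hdout : ∀ ℓ, 0 < dout ℓ) (hdin : ∀ ℓ, 0 < din ℓ) (hr : ∀ ℓ, 0 < r ℓ)
    (A : (ℓ : Fin L) → Matrix (Fin (din ℓ)) (Fin (r ℓ)) ℝ)
    (hA : ∀ ℓ, (A ℓ)ᵀ * A ℓ = 1)
    (f : ((ℓ : Fin L) → Matrix (Fin (dout ℓ)) (Fin (din ℓ)) ℝ) → ℝ)
    (hf : Differentiable ℝ f) (Lip : ℝ)
    (hLip : ∀ W W', ‖fderiv ℝ f W - fderiv ℝ f W'‖ ≤ Lip * ‖W - W'‖)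
    (μ : ℝ) (hμ : 0 < μ)
    (W : (ℓ : Fin L) → Matrix (Fin (dout ℓ)) (Fin (din ℓ)) ℝ) :
    ∀ ℓ, gradBlock (smoothedA f μ A) W ℓ * (A ℓ * (A ℓ)ᵀ) =
      matExp (gaussBlocks dout r)
        (fun R => ((f (W + μ • perturbA A R) - f W) / μ) •
          (Matrix.of (R ℓ) * (A ℓ)ᵀ)) := by
  intro ℓ
  obtain ⟨hprob, hM, hS⟩ := gauss_blocks_facts dout r
  have hn : NiceFn f := by
    refine ⟨hf, |Lip|, abs_nonneg _, fun x y => (hLip x y).trans ?_⟩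
    gcongr
    exact le_abs_self _
  let D : ((ℓ : Fin L) → Fin (dout ℓ) → Fin (r ℓ) → ℝ) →L[ℝ]
      ((ℓ : Fin L) → Matrix (Fin (dout ℓ)) (Fin (din ℓ)) ℝ) :=
    LinearMap.toContinuousLinearMap (μ • perturbLin A)
  have hD : ∀ R, D R = μ • perturbA A R := fun R => rfl
  have key := fun (i : Fin (dout ℓ)) (k : Fin (r ℓ)) =>
    abstract_two_point hn D W hM (X := fun R => R ℓ i k) (by fun_prop)
      (fun x => (norm_le_pi_norm (x ℓ i) k).trans
        ((norm_le_pi_norm (x ℓ) i).trans (norm_le_pi_norm x ℓ))) (hS ℓ i k)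
  simp only [hD] at key
  change ∀ i k, _ ∧ _ = fderiv ℝ (smoothedA f μ A) W _ at key
  set S := fderiv ℝ (smoothedA f μ A) W with hSdef
  have hv : ∀ (i : Fin (dout ℓ)) (k : Fin (r ℓ)),
      perturbA A (Pi.single ℓ (Pi.single i (Pi.single k 1))) =
        ∑ a, A ℓ a k • (Pi.single ℓ (Matrix.single i a (1 : ℝ)) :
          (ℓ : Fin L) → Matrix (Fin (dout ℓ)) (Fin (din ℓ)) ℝ) := by
    intro i k
    funext m
    by_cases hm : m = ℓ
    · subst hm
      ext p q
      by_cases hp : p = i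
      · subst hp
        simp [perturbA, Matrix.mul_apply, Finset.sum_apply, Matrix.sum_apply, Pi.single_apply,
          Matrix.single_apply]
      · simp [perturbA, Matrix.mul_apply, Finset.sum_apply, Matrix.sum_apply, Pi.single_apply,
          Matrix.single_apply, hp, Ne.symm hp]
    · ext p q
      simp [perturbA, Matrix.mul_apply, Finset.sum_apply, hm]
  ext i j
  simp only [matExp, gradBlock, Matrix.of_apply, Matrix.mul_apply, Matrix.smul_apply,
    Matrix.transpose_apply, smul_eq_mul]
  have hR : ∀ R : (ℓ : Fin L) → Fin (dout ℓ) → Fin (r ℓ) → ℝ,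
      (f (W + μ • perturbA A R) - f W) / μ * ∑ k, R ℓ i k * A ℓ j k =
      ∑ k, (A ℓ j k / μ) * ((f (W + μ • perturbA A R) - f W) * R ℓ i k) := by
    intro R
    rw [Finset.mul_sum]
    exact Finset.sum_congr rfl fun k _ => by ring
  simp_rw [hR]
  rw [integral_finsetSum _ fun k _ => (key i k).1.const_mul _]
  simp_rw [integral_const_mul, (key i _).2, hv, map_smul, map_sum, map_smul, smul_eq_mul,
    Finset.mul_sum]
  rw [Finset.sum_comm]
  refine Finset.sum_congr rfl fun k _ => Finset.sum_congr rfl fun a _ => ?_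
  rw [← hSdef]
  field_simp

end
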